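/- Let P ∈ ℝ^{d×n} be a matrix whose columns are ℚ-linearly independent, let ψ_p : ℝ^n → ℂ be continuous and 2π-periodic in each coordinate, let k ∈ ℤ^n and set λ = Pk ∈ ℝ^d. Then the Fourier–Bohr coefficient of the quasiperiodic function ψ(x) = ψ_p(Pᵀx) at frequency λ equals the k-th Fourier coefficient of its parent function: lim_{T→∞} (2T)^{-d} ∫_{K_T} ψ_p(Pᵀx) e^{−iλ·x} dx = (2π)^{-n} ∫_{[0,2π]^n} ψ_p(y) e^{−ik·y} dy. -/

import Mathlib

open MeasureTheory Filter
open scoped Real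

open Matrix Metric Topology

/-!
By Stone–Weierstrass, trigonometric polynomials are dense among the continuous functions on the
torus `(ℝ / 2πℤ)^κ`, and averages against probability measures are 1-Lipschitz for the sup norm, so
it suffices to compare the two mean values on a single character `y ↦ exp (i m · y)`, `m ∈ ℤ^κ`.
Along `x ↦ Pᵀ x` it becomes `x ↦ exp (i (P m) · x)`, whose mean is `0` unless `P m = 0`; by
independence of the columns of `P` this happens only for `m = 0`, just as for the mean over a period
cell. The Fourier–Bohr coefficient is the mean value of the periodic function
`y ↦ ψ_p(y) exp (-i k · y)` composed with `Pᵀ`.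
-/

section Averages

variable {X 𝕜 : Type*} [TopologicalSpace X] [MeasurableSpace X] [OpensMeasurableSpace X] [RCLike 𝕜]

lemma setAverage_comp_eq_integral_map_cond {Ω : Type*} [MeasurableSpace Ω] (μ : Measure Ω)
    (s : Set Ω) {φ : Ω → X} (hφ : Measurable φ) (f : C(X, 𝕜)) :
    ⨍ x in s, f (φ x) ∂μ = ∫ t, f t ∂(ProbabilityTheory.cond μ s).map φ := by
  rw [integral_map hφ.aemeasurable f.continuous.aestronglyMeasurable, setAverage_eq',
    ProbabilityTheory.cond]

variable [CompactSpace X]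

lemma integrable_continuousMap (μ : Measure X) [IsFiniteMeasure μ] (f : C(X, 𝕜)) :
    Integrable f μ :=
  (BoundedContinuousFunction.mkOfCompact f).integrable μ

lemma lipschitzWith_one_integral_continuousMap (μ : Measure X) [IsZeroOrProbabilityMeasure μ] :
    LipschitzWith 1 fun f : C(X, 𝕜) => ∫ x, f x ∂μ := by
  refine LipschitzWith.mk_one fun f g => ?_
  rw [dist_eq_norm, ← integral_sub (integrable_continuousMap μ f) (integrable_continuousMap μ g)]
  calc ‖∫ x, f x - g x ∂μ‖ ≤ dist f g * μ.real Set.univ :=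
        norm_integral_le_of_norm_le_const <| .of_forall fun x =>
          (dist_eq_norm (f x) (g x)).symm.trans_le (ContinuousMap.dist_apply_le_dist x)
    _ ≤ dist f g := mul_le_of_le_one_right dist_nonneg measureReal_le_one

theorem tendsto_integral_of_topologicalClosure_span_eq_top {α : Type*} {l : Filter α}
    {μ : α → Measure X} [∀ a, IsZeroOrProbabilityMeasure (μ a)]
    {ν : Measure X} [IsZeroOrProbabilityMeasure ν] {S : Set C(X, 𝕜)}
    (hS : (Submodule.span 𝕜 S).topologicalClosure = ⊤)
    (h : ∀ f ∈ S, Tendsto (fun a => ∫ x, f x ∂μ a) l (𝓝 (∫ x, f x ∂ν))) (f : C(X, 𝕜)) :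
    Tendsto (fun a => ∫ x, f x ∂μ a) l (𝓝 (∫ x, f x ∂ν)) := by
  have closed : IsClosed {f : C(X, 𝕜) | Tendsto (fun a => ∫ x, f x ∂μ a) l (𝓝 (∫ x, f x ∂ν))} :=
    (LipschitzWith.uniformEquicontinuous _ 1 fun a =>
      lipschitzWith_one_integral_continuousMap (μ a)).equicontinuous.isClosed_setOfPred_tendsto
        (lipschitzWith_one_integral_continuousMap ν).continuous
  refine closed.closure_subset_iff.2 (fun f hf => ?_)
    (hS.ge (Submodule.mem_top : f ∈ ⊤) : f ∈ closure (Submodule.span 𝕜 S : Set C(X, 𝕜)))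
  induction hf using Submodule.span_induction with
  | mem f hf => exact h f hf
  | zero => simp [tendsto_const_nhds]
  | add f g _ _ hf hg =>
    simpa [integral_add (integrable_continuousMap _ f) (integrable_continuousMap _ g)]
      using hf.add hg
  | smul c f _ hf => simpa [integral_const_mul] using hf.const_mul c

end Averages

section Boxes

variable {ι E : Type*} [Fintype ι] [NormedAddCommGroup E] [NormedSpace ℝ E]

lemma setAverage_Icc_eq_intervalIntegral {a b : ℝ} (hab : a ≤ b) (f : ℝ → E) :
    ⨍ t in Set.Icc a b, f t = (b - a)⁻¹ • ∫ t in a..b, f t := by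
  rw [setAverage_eq, Real.volume_real_Icc_of_le hab, integral_Icc_eq_integral_Ioc,
    intervalIntegral.integral_of_le hab]

lemma setAverage_Icc_pi {a b : ι → ℝ} (hab : a ≤ b) (f : (ι → ℝ) → E) :
    ⨍ x in Set.Icc a b, f x = (∏ i, (b i - a i))⁻¹ • ∫ x in Set.Icc a b, f x := by
  rw [setAverage_eq, measureReal_def, Real.volume_Icc_pi_toReal hab]

lemma setAverage_closedBall_pi {T : ℝ} (hT : 0 ≤ T) (f : (ι → ℝ) → E) :
    ⨍ x in closedBall (0 : ι → ℝ) T, f x =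
      ((2 * T) ^ Fintype.card ι)⁻¹ • ∫ x in {x : ι → ℝ | ∀ j, |x j| ≤ T}, f x := by
  have hset : closedBall (0 : ι → ℝ) T = {x | ∀ j, |x j| ≤ T} := by
    ext x
    simp [pi_norm_le_iff_of_nonneg hT]
  rw [setAverage_eq, measureReal_def, Real.volume_pi_closedBall _ hT, hset,
    ENNReal.toReal_ofReal (by positivity)]

lemma setAverage_univ_pi_prod {𝕜 : Type*} [RCLike 𝕜] {Y : ι → Type*}
    [∀ i, MeasurableSpace (Y i)] (μ : ∀ i, Measure (Y i)) [∀ i, SigmaFinite (μ i)]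
    (s : ∀ i, Set (Y i)) (f : ∀ i, Y i → 𝕜) :
    ⨍ x in Set.univ.pi s, ∏ i, f i (x i) ∂Measure.pi μ = ∏ i, ⨍ t in s i, f i t ∂μ i := by
  rw [setAverage_eq, Measure.restrict_pi_pi, integral_fintype_prod_eq_prod]
  simp only [setAverage_eq, measureReal_def, Measure.pi_pi, ENNReal.toReal_prod,
    RCLike.real_smul_eq_coe_mul, Finset.prod_mul_distrib, map_inv₀, map_prod,
    Finset.prod_inv_distrib]

end Boxes

section PlaneWaves

variable {ι : Type*} [Fintype ι]

lemma exp_intCast_mul_two_pi_mul_I (m : ℤ) :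
    Complex.exp ((m * (2 * π) : ℝ) * Complex.I) = 1 := by
  simpa [mul_assoc] using Complex.exp_int_mul_two_pi_mul_I m

/-- The character `x ↦ exp (i ξ · x)` of `ℝ^ι` with frequency `ξ`; the Fourier–Bohr coefficient of
`ψ` at frequency `ξ` is the mean value of `ψ * planeWave (-ξ)`. -/
noncomputable def planeWave (ξ x : ι → ℝ) : ℂ := Complex.exp ((ξ ⬝ᵥ x : ℝ) * Complex.I)

lemma planeWave_eq_prod (ξ x : ι → ℝ) :
    planeWave ξ x = ∏ i, Complex.exp ((ξ i * x i : ℝ) * Complex.I) := by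
  simp only [planeWave, dotProduct, Complex.ofReal_sum, Finset.sum_mul, Complex.exp_sum]

lemma continuous_planeWave (ξ : ι → ℝ) : Continuous (planeWave ξ) := by
  unfold planeWave dotProduct
  fun_prop

lemma periodic_planeWave_intCast [DecidableEq ι] (m : ι → ℤ) (j : ι) :
    Function.Periodic (planeWave fun i => (m i : ℝ)) (Pi.single j (2 * π)) := by
  intro y
  rw [planeWave, dotProduct_add, dotProduct_single, Complex.ofReal_add, add_mul, Complex.exp_add,
    exp_intCast_mul_two_pi_mul_I, mul_one, planeWave]

lemma exp_neg_I_mul_sum_eq_planeWave (ξ x : ι → ℝ) :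
    Complex.exp (-Complex.I * ((∑ i, ξ i * x i : ℝ) : ℂ)) = planeWave (-ξ) x := by
  rw [planeWave, neg_dotProduct, dotProduct, Complex.ofReal_neg, neg_mul_comm, mul_comm]

lemma planeWave_transpose_mulVec {κ : Type*} [Fintype κ] (P : Matrix ι κ ℝ) (ξ : κ → ℝ)
    (x : ι → ℝ) : planeWave ξ (Pᵀ *ᵥ x) = planeWave (P *ᵥ ξ) x := by
  rw [planeWave, planeWave, dotProduct_mulVec, vecMul_transpose]

lemma setAverage_univ_pi_planeWave (s : ι → Set ℝ) (ξ : ι → ℝ) :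
    ⨍ x in Set.univ.pi s, planeWave ξ x =
      ∏ i, ⨍ t in s i, Complex.exp ((ξ i * t : ℝ) * Complex.I) := by
  simp only [planeWave_eq_prod, volume_pi]
  exact setAverage_univ_pi_prod _ s fun i t => Complex.exp ((ξ i * t : ℝ) * Complex.I)

lemma integral_exp_ofReal_mul_mul_I {ξ : ℝ} (hξ : ξ ≠ 0) (a b : ℝ) :
    ∫ t in a..b, Complex.exp ((ξ * t : ℝ) * Complex.I) =
      (Complex.exp ((ξ * b : ℝ) * Complex.I) - Complex.exp ((ξ * a : ℝ) * Complex.I)) /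
        (ξ * Complex.I) := by
  have hc : (ξ : ℂ) * Complex.I ≠ 0 :=
    mul_ne_zero (Complex.ofReal_ne_zero.2 hξ) Complex.I_ne_zero
  simpa only [Complex.ofReal_mul, mul_right_comm] using
    integral_exp_mul_complex (a := a) (b := b) hc

lemma tendsto_setAverage_closedBall_exp (ξ : ℝ) :
    Tendsto (fun T : ℝ => ⨍ t in closedBall (0 : ℝ) T, Complex.exp ((ξ * t : ℝ) * Complex.I))
      atTop (𝓝 (if ξ = 0 then 1 else 0)) := by
  split_ifs with hξ
  · refine tendsto_const_nhds.congr' ?_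
    filter_upwards [eventually_gt_atTop 0] with T hT
    have hball : volume (closedBall (0 : ℝ) T) ≠ 0 := (measure_closedBall_pos _ _ hT).ne'
    simp [hξ, setAverage_const hball measure_closedBall_lt_top.ne]
  · have decay : Tendsto (fun T : ℝ => (2 * T)⁻¹ * (2 / |ξ|)) atTop (𝓝 0) := by
      simpa using (tendsto_inv_atTop_zero.comp
        (tendsto_id.const_mul_atTop (two_pos : (0 : ℝ) < 2))).mul_const (2 / |ξ|)
    refine squeeze_zero_norm' ?_ decay
    filter_upwards [eventually_ge_atTop 0] with T hT
    rw [Real.closedBall_eq_Icc, zero_sub, zero_add,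
      setAverage_Icc_eq_intervalIntegral (neg_le_self hT), integral_exp_ofReal_mul_mul_I hξ,
      norm_smul, norm_div, sub_neg_eq_add, ← two_mul, Real.norm_of_nonneg (by positivity),
      norm_mul, Complex.norm_I, mul_one, Complex.norm_real, Real.norm_eq_abs]
    gcongr
    calc _ ≤ ‖Complex.exp ((ξ * T : ℝ) * Complex.I)‖ + ‖Complex.exp ((ξ * -T : ℝ) * Complex.I)‖ :=
          norm_sub_le _ _
      _ = 2 := by simp only [Complex.norm_exp_ofReal_mul_I]; norm_num

lemma setAverage_Icc_zero_two_pi_exp (m : ℤ) :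
    ⨍ t in Set.Icc 0 (2 * π), Complex.exp ((m * t : ℝ) * Complex.I) = if m = 0 then 1 else 0 := by
  split_ifs with hm
  · have hcell : volume (Set.Icc 0 (2 * π)) ≠ 0 := by simp [Real.pi_pos]
    simp [hm, setAverage_const hcell measure_Icc_lt_top.ne]
  · rw [setAverage_Icc_eq_intervalIntegral Real.two_pi_pos.le,
      integral_exp_ofReal_mul_mul_I (Int.cast_ne_zero.2 hm), exp_intCast_mul_two_pi_mul_I]
    simp only [mul_zero, Complex.ofReal_zero, zero_mul, Complex.exp_zero, sub_self, zero_div,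
      smul_zero]

lemma tendsto_setAverage_closedBall_planeWave (ξ : ι → ℝ) :
    Tendsto (fun T : ℝ => ⨍ x in closedBall (0 : ι → ℝ) T, planeWave ξ x)
      atTop (𝓝 (if ξ = 0 then 1 else 0)) := by
  have hlim := tendsto_finsetProd Finset.univ fun i _ => tendsto_setAverage_closedBall_exp (ξ i)
  simp only [Fintype.prod_boole, ← Pi.zero_apply (M := fun _ : ι => ℝ), ← funext_iff] at hlim
  refine hlim.congr' ?_
  filter_upwards [eventually_ge_atTop 0] with T hT
  rw [closedBall_pi _ hT, setAverage_univ_pi_planeWave]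
  rfl

lemma setAverage_Icc_zero_two_pi_planeWave (m : ι → ℤ) :
    ⨍ y in Set.Icc (0 : ι → ℝ) (fun _ => 2 * π), planeWave (fun i => (m i : ℝ)) y =
      if m = 0 then 1 else 0 := by
  rw [← Set.pi_univ_Icc, setAverage_univ_pi_planeWave]
  simp only [Pi.zero_apply, setAverage_Icc_zero_two_pi_exp, Fintype.prod_boole, funext_iff]

end PlaneWaves

section Torus

variable {κ : Type*}

/-- The covering map `ℝ^κ → (ℝ / 2πℤ)^κ`, where the circles of circumference `2π` are rescaled to
`UnitAddCircle` because Mathlib's multivariate Fourier monomials live on `UnitAddTorus`. -/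
noncomputable def torusMk (y : κ → ℝ) : UnitAddTorus κ :=
  fun j => ((y j / (2 * π) : ℝ) : UnitAddCircle)

lemma isQuotientMap_torusMk : IsQuotientMap (torusMk : (κ → ℝ) → UnitAddTorus κ) := by
  have hcircle : IsOpenQuotientMap fun t : ℝ => ((t / (2 * π) : ℝ) : UnitAddCircle) :=
    QuotientAddGroup.isOpenQuotientMap_mk.comp
      (Homeomorph.mulRight₀ (2 * π)⁻¹ (inv_ne_zero Real.two_pi_pos.ne')).isOpenQuotientMap
  exact (IsOpenQuotientMap.piMap fun _ : κ => hcircle).isQuotientMap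

lemma mFourier_torusMk [Fintype κ] (m : κ → ℤ) (y : κ → ℝ) :
    UnitAddTorus.mFourier m (torusMk y) = planeWave (fun j => (m j : ℝ)) y := by
  rw [planeWave_eq_prod]
  refine Finset.prod_congr rfl fun j _ => ?_
  rw [torusMk, fourier_coe_apply]
  congr 1
  push_cast
  field_simp

lemma exists_int_of_torusMk_eq {y y' : κ → ℝ} (h : torusMk y = torusMk y') :
    ∃ z : κ → ℤ, y = y' + fun j => z j • (2 * π) := by
  have hj (j : κ) : ∃ c : ℤ, y j = y' j + c • (2 * π) := by
    have hzero : ((y j / (2 * π) - y' j / (2 * π) : ℝ) : UnitAddCircle) = 0 := by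
      rw [AddCircle.coe_sub]
      exact sub_eq_zero.2 (congrFun h j)
    obtain ⟨c, hc⟩ := (AddCircle.coe_eq_zero_iff 1).1 hzero
    refine ⟨c, ?_⟩
    rw [zsmul_eq_mul, mul_one, ← sub_div, eq_div_iff Real.two_pi_pos.ne'] at hc
    rw [zsmul_eq_mul, hc, add_sub_cancel]
  choose z hz using hj
  exact ⟨z, funext hz⟩

lemma periodic_finset_sum {G Y α : Type*} [AddCommMonoid G] {F : G → Y} (s : Finset α) {c : α → G}
    (h : ∀ i ∈ s, Function.Periodic F (c i)) : Function.Periodic F (∑ i ∈ s, c i) :=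
  Finset.sum_induction c (Function.Periodic F) (fun _ _ => .add_period)
    (Function.periodic_with_period_zero F) h

lemma exists_continuousMap_torusMk_eq [Finite κ] [DecidableEq κ] {Y : Type*} [TopologicalSpace Y]
    {F : (κ → ℝ) → Y} (hF : Continuous F)
    (hper : ∀ j, Function.Periodic F (Pi.single j (2 * π))) :
    ∃ g : C(UnitAddTorus κ, Y), ∀ y, g (torusMk y) = F y := by
  have := Fintype.ofFinite κ
  have hfiber : Function.FactorsThrough F torusMk := by
    intro y y' h
    obtain ⟨z, rfl⟩ := exists_int_of_torusMk_eq h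
    have hz : (fun j => z j • (2 * π)) = ∑ j, z j • (Pi.single j (2 * π) : κ → ℝ) := by
      simp only [← Pi.single_smul, Finset.univ_sum_single]
    rw [hz]
    exact periodic_finset_sum _ (fun j _ => (hper j).zsmul (z j)) y'
  have hmk := isQuotientMap_torusMk (κ := κ)
  let mk : C(κ → ℝ, UnitAddTorus κ) := ⟨torusMk, hmk.continuous⟩
  have hlift := IsQuotientMap.lift_comp (f := mk) hmk ⟨F, hF⟩ hfiber
  exact ⟨IsQuotientMap.lift (f := mk) hmk ⟨F, hF⟩ hfiber, fun y => DFunLike.congr_fun hlift y⟩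

end Torus

section MeanValue

variable {ι κ : Type*} [Fintype κ] {P : Matrix ι κ ℝ}

lemma mulVec_intCast_eq_zero_iff (hP : LinearIndependent ℤ P.col) (m : κ → ℤ) :
    P *ᵥ (fun j => (m j : ℝ)) = 0 ↔ m = 0 := by
  have hcomb : P *ᵥ (fun j => (m j : ℝ)) = ∑ j, m j • P.col j := by
    ext i
    simp [mulVec, dotProduct, mul_comm]
  refine ⟨fun h => funext <| Fintype.linearIndependent_iff.1 hP m (hcomb.symm.trans h), ?_⟩
  rintro rfl
  rw [hcomb]
  simp

variable [Fintype ι]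

theorem tendsto_setAverage_torusMk_transpose_mulVec (hP : LinearIndependent ℤ P.col)
    (g : C(UnitAddTorus κ, ℂ)) :
    Tendsto (fun T : ℝ => ⨍ x in closedBall (0 : ι → ℝ) T, g (torusMk (Pᵀ *ᵥ x))) atTop
      (𝓝 (⨍ y in Set.Icc (0 : κ → ℝ) (fun _ => 2 * π), g (torusMk y))) := by
  have measurable_mk : Measurable (torusMk : (κ → ℝ) → UnitAddTorus κ) :=
    isQuotientMap_torusMk.continuous.measurable
  have measurable_flow : Measurable fun x : ι → ℝ => torusMk (Pᵀ *ᵥ x) :=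
    measurable_mk.comp (by fun_prop)
  simp only [setAverage_comp_eq_integral_map_cond volume _ measurable_mk,
    setAverage_comp_eq_integral_map_cond volume _ measurable_flow]
  refine tendsto_integral_of_topologicalClosure_span_eq_top
    UnitAddTorus.span_mFourier_closure_eq_top ?_ g
  rintro _ ⟨m, rfl⟩
  simp only [← setAverage_comp_eq_integral_map_cond volume _ measurable_mk,
    ← setAverage_comp_eq_integral_map_cond volume _ measurable_flow, mFourier_torusMk,
    planeWave_transpose_mulVec, setAverage_Icc_zero_two_pi_planeWave,
    ← mulVec_intCast_eq_zero_iff hP m]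
  exact tendsto_setAverage_closedBall_planeWave _

theorem tendsto_setAverage_comp_transpose_mulVec_of_periodic [DecidableEq κ]
    (hP : LinearIndependent ℤ P.col) {F : (κ → ℝ) → ℂ} (hF : Continuous F)
    (hper : ∀ j, Function.Periodic F (Pi.single j (2 * π))) :
    Tendsto (fun T : ℝ => ⨍ x in closedBall (0 : ι → ℝ) T, F (Pᵀ *ᵥ x)) atTop
      (𝓝 (⨍ y in Set.Icc (0 : κ → ℝ) (fun _ => 2 * π), F y)) := by
  obtain ⟨g, hg⟩ := exists_continuousMap_torusMk_eq hF hper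
  simpa only [hg] using tendsto_setAverage_torusMk_transpose_mulVec hP g

theorem tendsto_setAverage_comp_transpose_mulVec_mul_planeWave [DecidableEq κ]
    (hP : LinearIndependent ℤ P.col) {F : (κ → ℝ) → ℂ} (hF : Continuous F)
    (hper : ∀ j, Function.Periodic F (Pi.single j (2 * π))) (k : κ → ℤ) :
    Tendsto (fun T : ℝ => ⨍ x in closedBall (0 : ι → ℝ) T,
        F (Pᵀ *ᵥ x) * planeWave (-(P *ᵥ fun j => (k j : ℝ))) x) atTop
      (𝓝 (⨍ y in Set.Icc (0 : κ → ℝ) (fun _ => 2 * π),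
        F y * planeWave (-fun j => (k j : ℝ)) y)) := by
  have hk : (-fun j => (k j : ℝ)) = fun j => ((-k) j : ℝ) := by
    ext j
    simp only [Pi.neg_apply, Int.cast_neg]
  have hmean := tendsto_setAverage_comp_transpose_mulVec_of_periodic hP
    (hF.mul (continuous_planeWave fun j => ((-k) j : ℝ)))
    fun j => (hper j).mul (periodic_planeWave_intCast (-k) j)
  simpa only [Pi.mul_apply, planeWave_transpose_mulVec, ← hk, mulVec_neg] using hmean

end MeanValue

/-- The Fourier–Bohr coefficient of the quasiperiodic function `ψ(x) = ψ_p(Pᵀx)`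
at frequency `λ = Pk` equals the `k`-th Fourier coefficient of the parent
function `ψ_p`. -/
theorem fourierBohr_eq_parent_fourierCoeff
    (d n : ℕ) (hd : 0 < d) (hn : 0 < n)
    (P : Matrix (Fin d) (Fin n) ℝ)
    (hP : LinearIndependent ℚ (fun j : Fin n => fun i : Fin d => P i j))
    (ψp : (Fin n → ℝ) → ℂ) (hcont : Continuous ψp)
    (hper : ∀ (y : Fin n → ℝ) (j : Fin n),
      ψp (fun i => y i + if i = j then 2 * π else 0) = ψp y)
    (k : Fin n → ℤ) :
    Tendsto
      (fun T : ℝ => (((2 * T) ^ d)⁻¹ : ℝ) •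
        ∫ x in {x : Fin d → ℝ | ∀ j, |x j| ≤ T},
          ψp (fun j => ∑ i, P i j * x i) *
            Complex.exp (-Complex.I * ((∑ i, (∑ j, P i j * (k j : ℝ)) * x i : ℝ) : ℂ)))
      atTop
      (nhds ((((2 * π) ^ n)⁻¹ : ℝ) •
        ∫ y in Set.Icc (0 : Fin n → ℝ) (fun _ => 2 * π),
          ψp y * Complex.exp (-Complex.I * ((∑ j, (k j : ℝ) * y j : ℝ) : ℂ)))) := by
  have hψ (j : Fin n) : Function.Periodic ψp (Pi.single j (2 * π)) := fun y => by
    simpa only [Pi.add_def, Pi.single_apply] using hper y j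
  have hP_int : LinearIndependent ℤ P.col := hP.restrict_scalars' ℤ
  have hmean := tendsto_setAverage_comp_transpose_mulVec_mul_planeWave hP_int hcont hψ k
  have hcell : (0 : Fin n → ℝ) ≤ fun _ => 2 * π := fun _ => Real.two_pi_pos.le
  simp only [setAverage_Icc_pi hcell, Pi.zero_apply, sub_zero, Finset.prod_const, Finset.card_univ,
    Fintype.card_fin, ← exp_neg_I_mul_sum_eq_planeWave] at hmean
  refine hmean.congr' ?_
  filter_upwards [eventually_ge_atTop 0] with T hT
  rw [setAverage_closedBall_pi hT, Fintype.card_fin]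
  rfl
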